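/- (Lemma 1: the arc-eager model contains the edge-factored model.) Fix n ≥ 1 and any real-valued function f_G on pairs of indices. Define the arc-eager parameterization by f_sh = 0, f_re = 0, f_rl(i, j) = f_G(j, i), and f_ra(k, i) = f_G(k, i). Then for every complete arc-eager transition sequence t for a sentence of length n, F(t) = Σ_{(h,m) ∈ A(t)} f_G(h, m); that is, this arc-eager parameterization assigns to every complete transition sequence exactly the edge-factored score of the arc set it produces. -/

import Mathlib

/-- A parser configuration: a stack of indices (head of the list = top of stack),
a buffer of indices (head of the list = front of buffer), and a set of arcs
`(h, m)` meaning `h` is the head of modifier `m`. -/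
structure Config where
  stack : List ℕ
  buffer : List ℕ
  arcs : Finset (ℕ × ℕ)

/-- Initial configuration for a sentence of length `n`:
empty stack, buffer `[0, 1, …, n]` (ROOT is index 0), empty arc set. -/
def initConfig (n : ℕ) : Config := ⟨[], List.range (n + 1), ∅⟩

/-- Stack-top feature of a configuration: `none` plays the role of the dummy index ⊥
used when the stack is empty. -/
def stackFeat (c : Config) : Option ℕ := c.stack.head?

/-- Buffer-front feature of a configuration: the end-marker index `n + 1`
when the buffer is empty. -/
def bufFeat (n : ℕ) (c : Config) : ℕ := c.buffer.headD (n + 1)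

/-- Arc-eager transition labels. -/
inductive ETrans
  | sh | rl | ra | re
deriving DecidableEq

/-- Single arc-eager transitions between configurations. -/
inductive EStep : Config → ETrans → Config → Prop
  | sh (σ b β A) : EStep ⟨σ, b :: β, A⟩ .sh ⟨b :: σ, β, A⟩
  | rl (s σ b β A) (h : ∀ x, (x, s) ∉ A) :
      EStep ⟨s :: σ, b :: β, A⟩ .rl ⟨σ, b :: β, insert (b, s) A⟩
  | ra (s σ b β A) :
      EStep ⟨s :: σ, b :: β, A⟩ .ra ⟨b :: s :: σ, β, insert (s, b) A⟩
  | re (s σ β A) (h : ∃ x, (x, s) ∈ A) :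
      EStep ⟨s :: σ, β, A⟩ .re ⟨σ, β, A⟩

/-- `ETrace c t c'` holds when `t` is a list of (configuration, transition) pairs,
each transition taken in the recorded configuration, leading from `c` to `c'`. -/
inductive ETrace : Config → List (Config × ETrans) → Config → Prop
  | nil (c) : ETrace c [] c
  | cons {c c' cf : Config} {τ : ETrans} {rest} :
      EStep c τ c' → ETrace c' rest cf → ETrace c ((c, τ) :: rest) cf

/-- Score of an arc-eager transition sequence under parameterization
`(fsh, fra, frl, fre)`: the sum, over the transitions, of the corresponding
scoring function evaluated at the feature pair of the configuration in which
the transition is taken. -/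
def escore (n : ℕ) (fsh fra frl fre : Option ℕ → ℕ → ℝ)
    (t : List (Config × ETrans)) : ℝ :=
  (t.map fun e =>
    (match e.2 with
      | ETrans.sh => fsh
      | ETrans.ra => fra
      | ETrans.rl => frl
      | ETrans.re => fre) (stackFeat e.1) (bufFeat n e.1)).sum

/-- Arc-hybrid transition labels. -/
inductive HTrans
  | sh | rr | rl
deriving DecidableEq

/-- Single arc-hybrid transitions between configurations. -/
inductive HStep : Config → HTrans → Config → Prop
  | sh (σ b β A) : HStep ⟨σ, b :: β, A⟩ .sh ⟨b :: σ, β, A⟩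
  | rr (s0 s1 σ β A) :
      HStep ⟨s0 :: s1 :: σ, β, A⟩ .rr ⟨s1 :: σ, β, insert (s1, s0) A⟩
  | rl (s σ b β A) :
      HStep ⟨s :: σ, b :: β, A⟩ .rl ⟨σ, b :: β, insert (b, s) A⟩

/-- `HTrace c t c'` holds when `t` is a list of (configuration, transition) pairs,
each transition taken in the recorded configuration, leading from `c` to `c'`. -/
inductive HTrace : Config → List (Config × HTrans) → Config → Prop
  | nil (c) : HTrace c [] c
  | cons {c c' cf : Config} {τ : HTrans} {rest} :
      HStep c τ c' → HTrace c' rest cf → HTrace c ((c, τ) :: rest) cf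

/-- Score of an arc-hybrid transition sequence under parameterization
`(gsh, grr, grl)`. -/
def hscore (n : ℕ) (gsh grr grl : Option ℕ → ℕ → ℝ)
    (t : List (Config × HTrans)) : ℝ :=
  (t.map fun e =>
    (match e.2 with
      | HTrans.sh => gsh
      | HTrans.rr => grr
      | HTrans.rl => grl) (stackFeat e.1) (bufFeat n e.1)).sum

/-!
The score telescopes along a trace: a transition scores `fG h m` exactly when it inserts the arc
`(h, m)`, so it is enough that no arc is ever inserted twice. Left-reduce only attaches a modifier
without a head; right-attach attaches the buffer front, and no token still in the buffer has a head.
-/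

/-- A configuration whose buffer tokens have not been processed: they are pairwise distinct, absent
from the stack, and not yet the modifier of any arc. This is the invariant of arc-eager parsing
that makes every inserted arc new. -/
structure Config.HasFreshBuffer (c : Config) : Prop where
  nodup : c.buffer.Nodup
  disjoint : c.stack.Disjoint c.buffer
  unattached : ∀ m ∈ c.buffer, ∀ h, (h, m) ∉ c.arcs

theorem hasFreshBuffer_initConfig (n : ℕ) : (initConfig n).HasFreshBuffer where
  nodup := List.nodup_range
  disjoint := List.disjoint_nil_left _
  unattached _ _ _ := Finset.notMem_empty _

theorem escore_cons (n : ℕ) (fsh fra frl fre : Option ℕ → ℕ → ℝ)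
    (e : Config × ETrans) (t : List (Config × ETrans)) :
    escore n fsh fra frl fre (e :: t) =
      escore n fsh fra frl fre [e] + escore n fsh fra frl fre t := by
  simp [escore]

namespace EStep

variable {c c' : Config} {τ : ETrans}

theorem hasFreshBuffer (hstep : EStep c τ c') (hc : c.HasFreshBuffer) : c'.HasFreshBuffer := by
  obtain ⟨nodup, disjoint, unattached⟩ := hc
  cases hstep with
  | sh σ b β A =>
    obtain ⟨hb, hβ⟩ := List.nodup_cons.mp nodup
    exact ⟨hβ, List.disjoint_cons_left.mpr ⟨hb, (List.disjoint_cons_right.mp disjoint).2⟩,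
      fun m hm => unattached m (List.mem_cons_of_mem b hm)⟩
  | rl s σ b β A _ =>
    obtain ⟨hs, hσ⟩ := List.disjoint_cons_left.mp disjoint
    refine ⟨nodup, hσ, fun m hm h hmem => ?_⟩
    rcases Finset.mem_insert.mp hmem with heq | hA
    · obtain ⟨-, rfl⟩ := Prod.mk.inj heq
      exact hs hm
    · exact unattached m hm h hA
  | ra s σ b β A =>
    obtain ⟨hb, hβ⟩ := List.nodup_cons.mp nodup
    refine ⟨hβ, List.disjoint_cons_left.mpr ⟨hb, (List.disjoint_cons_right.mp disjoint).2⟩,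
      fun m hm h hmem => ?_⟩
    rcases Finset.mem_insert.mp hmem with heq | hA
    · obtain ⟨-, rfl⟩ := Prod.mk.inj heq
      exact hb hm
    · exact unattached m (List.mem_cons_of_mem b hm) h hA
  | re s σ β A _ =>
    exact ⟨nodup, (List.disjoint_cons_left.mp disjoint).2, unattached⟩

theorem sum_arcs_add_escore (n : ℕ) {fG : ℕ → ℕ → ℝ} {fsh fra frl fre : Option ℕ → ℕ → ℝ}
    (hsh : ∀ k i, fsh k i = 0) (hre : ∀ k i, fre k i = 0)
    (hrl : ∀ i j, frl (some i) j = fG j i) (hra : ∀ k i, fra (some k) i = fG k i)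
    (hstep : EStep c τ c') (hc : c.HasFreshBuffer) :
    ∑ p ∈ c.arcs, fG p.1 p.2 + escore n fsh fra frl fre [(c, τ)] =
      ∑ p ∈ c'.arcs, fG p.1 p.2 := by
  cases hstep with
  | sh σ b β A => simp [escore, hsh]
  | rl s σ b β A hs =>
    have hnew : (b, s) ∉ A := hs b
    simp [escore, stackFeat, bufFeat, hrl, Finset.sum_insert hnew, add_comm]
  | ra s σ b β A =>
    have hnew : (s, b) ∉ A := hc.unattached b List.mem_cons_self s
    simp [escore, stackFeat, bufFeat, hra, Finset.sum_insert hnew, add_comm]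
  | re s σ β A _ => simp [escore, hre]

end EStep

theorem arc_eager_contains_edge_factored_general
    (n : ℕ) {fG : ℕ → ℕ → ℝ} {fsh fra frl fre : Option ℕ → ℕ → ℝ}
    (hsh : ∀ k i, fsh k i = 0) (hre : ∀ k i, fre k i = 0)
    (hrl : ∀ i j, frl (some i) j = fG j i) (hra : ∀ k i, fra (some k) i = fG k i)
    {t : List (Config × ETrans)} {c c' : Config}
    (ht : ETrace c t c') (hc : c.HasFreshBuffer) :
    ∑ p ∈ c.arcs, fG p.1 p.2 + escore n fsh fra frl fre t = ∑ p ∈ c'.arcs, fG p.1 p.2 := by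
  induction ht with
  | nil c => simp [escore]
  | cons hstep _ ih =>
    rw [escore_cons, ← add_assoc, hstep.sum_arcs_add_escore n hsh hre hrl hra hc,
      ih (hstep.hasFreshBuffer hc)]

/-- **Lemma 1 (arc-eager contains edge-factored).**
Fix `n ≥ 1` and an edge-factored parameter `fG`. Take any arc-eager
parameterization `(fsh, fra, frl, fre)` with `fsh = 0`, `fre = 0`,
`frl(i, j) = fG(j, i)`, and `fra(k, i) = fG(k, i)` (on actual indices).
Then every complete arc-eager transition sequence `t` for a sentence of
length `n` satisfies `F(t) = ∑ (h,m) ∈ A(t), fG h m`. -/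
theorem arc_eager_contains_edge_factored
    (n : ℕ) (hn : 1 ≤ n) (fG : ℕ → ℕ → ℝ)
    (fsh fra frl fre : Option ℕ → ℕ → ℝ)
    (hsh : ∀ k i, fsh k i = 0)
    (hre : ∀ k i, fre k i = 0)
    (hrl : ∀ i j, frl (some i) j = fG j i)
    (hra : ∀ k i, fra (some k) i = fG k i)
    (t : List (Config × ETrans)) (A : Finset (ℕ × ℕ))
    (ht : ETrace (initConfig n) t ⟨[0], [], A⟩) :
    escore n fsh fra frl fre t = ∑ p ∈ A, fG p.1 p.2 := by
  simpa [initConfig] using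
    arc_eager_contains_edge_factored_general n hsh hre hrl hra ht (hasFreshBuffer_initConfig n)
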